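/- There exist first-order formulas φ_samecol(x,y), φ_samerow(x,y), φ_q(x,y), φ_rc(x,y) over the language with two binary relation symbols for < and ◁ such that for every n ∈ ℕ and all a,b ∈ {0,...,n}, the finite prefix structure ({0,...,n}, <, ◁) satisfies: φ_samecol(a,b) iff c(a) = c(b); φ_samerow(a,b) iff r(a) = r(b); φ_q(a,b) iff q(a) = b; and φ_rc(a,b) iff r(a) = c(b). -/

import Mathlib

open FirstOrder Language

/-- `q_i = i(i+1)/2`, the smallest element of column `i`. -/
def qseq (i : ℕ) : ℕ := i * (i + 1) / 2

/-- `c(x)`, the column number of `x`: the largest `i` with `q_i ≤ x`. -/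
def col (x : ℕ) : ℕ := Nat.findGreatest (fun i => qseq i ≤ x) x

/-- `q(x) = q_{c(x)}`, the bottom-most element of the column of `x`. -/
def qf (x : ℕ) : ℕ := qseq (col x)

/-- `r(x) = x - q(x)`, the row number of `x`. -/
def rowf (x : ℕ) : ℕ := x - qf x

/-- The row-major linear order `◁`. -/
def ordc (x y : ℕ) : Prop := rowf x < rowf y ∨ (rowf x = rowf y ∧ col x < col y)

/-- Relation symbols of the language with the two binary relations `<` and `◁`. -/
inductive Rel2 : ℕ → Type
  | lt : Rel2 2
  | ordc : Rel2 2

/-- The language with two binary relation symbols, for `<` and `◁`. -/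
def Lord2 : Language := ⟨fun _ => Empty, Rel2⟩

/-- The finite prefix structure `({0,...,n}, <, ◁)`. -/
def struct2 (n : ℕ) : Lord2.Structure (Fin (n + 1)) where
  funMap := fun f _ => f.elim
  RelMap := fun r v =>
    match r with
    | .lt => (v 0 : ℕ) < (v 1 : ℕ)
    | .ordc => ordc (v 0 : ℕ) (v 1 : ℕ)

/-! ### Arithmetic of columns and rows -/

theorem qseq_succ (i : ℕ) : qseq (i + 1) = qseq i + i + 1 := by
  unfold qseq
  rw [show (i + 1) * (i + 1 + 1) = i * (i + 1) + (i + 1) * 2 by ring,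
    Nat.add_mul_div_right _ _ (by norm_num)]
  ring

theorem qseq_mono : Monotone qseq :=
  monotone_nat_of_le_succ (fun i => by rw [qseq_succ]; omega)

theorem le_qseq (i : ℕ) : i ≤ qseq i := by
  induction i with
  | zero => simp
  | succ k ih => rw [qseq_succ]; omega

theorem qseq_col_le (x : ℕ) : qseq (col x) ≤ x := by
  unfold col
  exact Nat.findGreatest_spec (P := fun i => qseq i ≤ x) (m := 0) (Nat.zero_le _) (by simp [qseq])

theorem le_col {i x : ℕ} (h : qseq i ≤ x) : i ≤ col x :=
  Nat.le_findGreatest ((le_qseq i).trans h) h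

theorem row_le_col (x : ℕ) : rowf x ≤ col x := by
  by_contra hc
  have h1 := qseq_col_le x
  have h2 : col x + 1 ≤ col x := le_col (by rw [qseq_succ]; unfold rowf qf at hc; omega)
  omega

theorem eq_add (x : ℕ) : x = qseq (col x) + rowf x := by
  have := qseq_col_le x
  unfold rowf qf
  omega

theorem col_add {i j : ℕ} (h : j ≤ i) : col (qseq i + j) = i := by
  apply le_antisymm
  · by_contra hc
    have h1 := qseq_mono (show i + 1 ≤ col (qseq i + j) by omega)
    have h2 := qseq_col_le (qseq i + j)
    rw [qseq_succ] at h1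
    omega
  · exact le_col (by omega)

theorem row_add {i j : ℕ} (h : j ≤ i) : rowf (qseq i + j) = j := by
  unfold rowf qf
  rw [col_add h]
  omega

theorem col_mono {x y : ℕ} (h : x ≤ y) : col x ≤ col y :=
  le_col ((qseq_col_le x).trans h)

theorem succ_cases (x : ℕ) :
    (rowf x < col x ∧ col (x + 1) = col x ∧ rowf (x + 1) = rowf x + 1) ∨
    (rowf x = col x ∧ col (x + 1) = col x + 1 ∧ rowf (x + 1) = 0) := by
  have h := eq_add x
  rcases (row_le_col x).lt_or_eq with h1 | h1
  · left
    have e : x + 1 = qseq (col x) + (rowf x + 1) := by omega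
    refine ⟨h1, ?_, ?_⟩
    · conv_lhs => rw [e]
      exact col_add h1
    · conv_lhs => rw [e]
      exact row_add h1
  · right
    have e : x + 1 = qseq (col x + 1) + 0 := by rw [qseq_succ]; omega
    refine ⟨h1, ?_, ?_⟩
    · conv_lhs => rw [e]
      exact col_add (Nat.zero_le _)
    · conv_lhs => rw [e]
      exact row_add (Nat.zero_le _)

theorem row_zero : rowf 0 = 0 := by unfold rowf; omega

theorem col_zero : col 0 = 0 := by simp [col]

theorem col_pos {x : ℕ} (h : 0 < x) : 0 < col x :=
  le_col (i := 1) (by simp only [qseq]; omega)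

/-! ### Semantic characterisations in the prefix -/

theorem bottom_iff {n : ℕ} (y : Fin (n + 1)) :
    (∀ p : Fin (n + 1), (p : ℕ) < y → (∀ z : Fin (n + 1), (p : ℕ) < z → ¬ (z : ℕ) < y) →
      ¬ ordc y p → ∀ z : Fin (n + 1), ¬ (z : ℕ) < p) ↔ rowf y = 0 := by
  obtain ⟨y, hy⟩ := y
  simp only
  constructor
  · intro h
    rcases Nat.eq_zero_or_pos y with rfl | hpos
    · exact row_zero
    obtain ⟨p, rfl⟩ : ∃ p, y = p + 1 := ⟨y - 1, by omega⟩
    rcases succ_cases p with ⟨h1, h2, h3⟩ | ⟨h1, h2, h3⟩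
    · have := h ⟨p, by omega⟩ (by simp) (by intro z; simp only; omega)
        (by simp only [ordc]; omega) ⟨0, by omega⟩
      simp only at this
      have hp : p = 0 := by omega
      subst hp
      rw [col_zero] at h1
      omega
    · exact h3
  · rintro h ⟨p, hp⟩ h1 h2 h3 ⟨z, hz⟩ h4
    simp only at *
    have e : y = p + 1 := by
      by_contra hne
      exact h2 ⟨p + 1, by omega⟩ (by simp) (by simp only; omega)
    subst e
    have hp0 := col_pos (show 0 < p by omega)
    rcases succ_cases p with ⟨g1, g2, g3⟩ | ⟨g1, g2, g3⟩
    · omega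
    · exact h3 (Or.inl (by omega))

theorem samecol_iff {n : ℕ} (a b : Fin (n + 1)) :
    (∀ z : Fin (n + 1), rowf z = 0 → ((a : ℕ) < z ↔ (b : ℕ) < z)) ↔ col a = col b := by
  have key : ∀ x z : ℕ, rowf z = 0 → (x < z ↔ col x < col z) := by
    intro x z hz
    have h1 := eq_add z
    constructor
    · intro h
      by_contra hc
      have := qseq_mono (show col z ≤ col x by omega)
      have := qseq_col_le x
      omega
    · intro h
      by_contra hc
      have := col_mono (show z ≤ x by omega)
      omega
  have main : ∀ a b : Fin (n + 1),
      (∀ z : Fin (n + 1), rowf z = 0 → ((a : ℕ) < z ↔ (b : ℕ) < z)) → ¬ col a < col b := by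
    intro a b h hlt
    have hq := qseq_col_le b
    have hr : rowf (qseq (col b)) = 0 := row_add (Nat.zero_le _)
    have hc : col (qseq (col b)) = col b := col_add (Nat.zero_le _)
    have := h ⟨qseq (col b), by omega⟩ hr
    simp only [key _ _ hr, hc] at this
    omega
  constructor
  · intro h
    have h1 := main a b h
    have h2 := main b a (fun z hz => (h z hz).symm)
    omega
  · intro h z hz
    rw [key _ _ hz, key _ _ hz, h]

theorem halfrow_iff {n : ℕ} (a b : Fin (n + 1)) :
    ((a : ℕ) < b ∧ ordc a b ∧ (rowf b ≠ 0 → ∀ p : Fin (n + 1), (p : ℕ) < b →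
      (∀ z : Fin (n + 1), (p : ℕ) < z → ¬ (z : ℕ) < b) → ordc p a)) ↔
      ((a : ℕ) < b ∧ rowf a = rowf b) := by
  obtain ⟨a, ha⟩ := a
  obtain ⟨b, hb⟩ := b
  simp only
  refine and_congr_right fun hab => ?_
  have hc := col_mono hab.le
  have ea := eq_add a
  have eb := eq_add b
  obtain ⟨p, rfl⟩ : ∃ p, b = p + 1 := ⟨b - 1, by omega⟩
  constructor
  · rintro ⟨h1, h2⟩
    rcases succ_cases p with ⟨g1, g2, g3⟩ | ⟨g1, g2, g3⟩
    · have := h2 (by omega) ⟨p, by omega⟩ (by simp) (by intro z; simp only; omega)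
      simp only [ordc] at this h1
      omega
    · simp only [ordc] at h1
      omega
  · intro h
    have hne : col a ≠ col (p + 1) := by
      intro h'
      rw [h', h] at ea
      omega
    refine ⟨Or.inr ⟨h, by omega⟩, ?_⟩
    rintro h0 ⟨q, hq⟩ h1 h2
    simp only at *
    have e : q = p := by
      by_contra hne
      exact h2 ⟨p, by omega⟩ (by simp only; omega) (by simp)
    subst e
    rcases succ_cases q with ⟨g1, g2, g3⟩ | ⟨g1, g2, g3⟩
    · exact Or.inl (by omega)
    · omega

theorem samerow_iff {n : ℕ} (a b : Fin (n + 1)) :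
    (((a : ℕ) < b ∧ rowf a = rowf b) ∨ ((b : ℕ) < a ∧ rowf b = rowf a) ∨ a = b) ↔
      rowf a = rowf b := by
  rw [Fin.ext_iff]
  constructor
  · rintro (h | h | h)
    · exact h.2
    · exact h.2.symm
    · rw [h]
  · intro h
    omega

theorem q_iff {n : ℕ} (a b : Fin (n + 1)) :
    (rowf b = 0 ∧ col a = col b) ↔ qf a = b := by
  have eb := eq_add b
  constructor
  · rintro ⟨h1, h2⟩
    unfold qf
    rw [h2]
    omega
  · intro h
    unfold qf at h
    rw [← h]
    exact ⟨row_add (Nat.zero_le _), (col_add (Nat.zero_le _)).symm⟩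

theorem diag_iff {n : ℕ} (d : Fin (n + 1)) :
    (∀ e : Fin (n + 1), rowf e = rowf d → ¬ (e : ℕ) < d) ↔ rowf d = col d := by
  have ed := eq_add d
  constructor
  · intro h
    by_contra hne
    have h1 := row_le_col d
    obtain ⟨k, hk⟩ : ∃ k, col d = k + 1 := ⟨col d - 1, by omega⟩
    have hlt : qseq k + rowf d < d := by
      rw [hk, qseq_succ] at ed
      omega
    exact h ⟨qseq k + rowf d, by omega⟩ (row_add (by omega)) hlt
  · intro h e he hlt
    have h1 := row_le_col e
    have h2 := qseq_mono (show col d ≤ col e by omega)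
    have ee := eq_add e
    omega

theorem rc_iff {n : ℕ} (a b : Fin (n + 1)) :
    (∃ d : Fin (n + 1), rowf d = col d ∧ col d = col b ∧ rowf d = rowf a) ↔
      rowf a = col b := by
  constructor
  · rintro ⟨d, h1, h2, h3⟩
    omega
  · intro h
    have h1 := row_le_col a
    have h2 := qseq_mono h1
    have ea := eq_add a
    refine ⟨⟨qseq (rowf a) + rowf a, by omega⟩, ?_, ?_, ?_⟩
    · simp only
      rw [row_add le_rfl, col_add le_rfl]
    · simp only
      rw [col_add le_rfl, h]
    · exact row_add le_rfl

/-! ### The formulas -/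

namespace Ord2

/-- Variables available under `k` quantifiers. -/
abbrev Var (k : ℕ) := Fin 2 ⊕ Fin k

/-- Weakening of a variable. -/
def up {k : ℕ} (x : Var k) : Var (k + 1) := Sum.map id Fin.castSucc x

/-- The most recently quantified variable. -/
def new (k : ℕ) : Var (k + 1) := Sum.inr (Fin.last k)

/-- Formulas with `k` bound variables. -/
abbrev F (k : ℕ) := Lord2.BoundedFormula (Fin 2) k

/-- `x < y` -/
def fLt {k : ℕ} (x y : Var k) : F k :=
  BoundedFormula.rel (n := k) (l := 2) (Rel2.lt : Lord2.Relations 2) ![Term.var x, Term.var y]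

/-- `x ◁ y` -/
def fOrd {k : ℕ} (x y : Var k) : F k :=
  BoundedFormula.rel (n := k) (l := 2) (Rel2.ordc : Lord2.Relations 2) ![Term.var x, Term.var y]

/-- `x = y` -/
def fEq {k : ℕ} (x y : Var k) : F k := BoundedFormula.equal (Term.var x) (Term.var y)

/-- nothing lies strictly between `x` and `y` -/
def fAdj {k : ℕ} (x y : Var k) : F k :=
  ((fLt (up x) (new k)).imp (fLt (new k) (up y)).not).all

/-- `x` has row `0` -/
def fBot {k : ℕ} (y : Var k) : F k :=
  ((fLt (new k) (up y)).imp ((fAdj (new k) (up y)).imp ((fOrd (up y) (new k)).not.imp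
    (fLt (new (k + 1)) (up (new k))).not.all))).all

/-- same column -/
def fCol {k : ℕ} (a b : Var k) : F k :=
  ((fBot (new k)).imp ((fLt (up a) (new k)).iff (fLt (up b) (new k)))).all

/-- same row and `a < b` -/
def fHalf {k : ℕ} (a b : Var k) : F k :=
  fLt a b ⊓ (fOrd a b ⊓ ((fBot b).not.imp ((fLt (new k) (up b)).imp
    ((fAdj (new k) (up b)).imp (fOrd (new k) (up a)))).all))

/-- same row -/
def fRow {k : ℕ} (a b : Var k) : F k := fHalf a b ⊔ (fHalf b a ⊔ fEq a b)

/-- `q(a) = b` -/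
def fQ {k : ℕ} (a b : Var k) : F k := fBot b ⊓ fCol a b

/-- `d` lies on the diagonal -/
def fDiag {k : ℕ} (d : Var k) : F k :=
  ((fRow (new k) (up d)).imp (fLt (new k) (up d)).not).all

/-- `r(a) = c(b)` -/
def fRC {k : ℕ} (a b : Var k) : F k :=
  (fDiag (new k) ⊓ (fCol (new k) (up b) ⊓ fRow (new k) (up a))).ex

section

attribute [local instance] struct2

variable {n k : ℕ} (v : Fin 2 → Fin (n + 1)) (xs : Fin k → Fin (n + 1))

theorem elim_up (z : Fin (n + 1)) (x : Var k) :
    Sum.elim v (Fin.snoc xs z : Fin (k + 1) → Fin (n + 1)) (up x) = Sum.elim v xs x := by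
  cases x <;> simp [up]

theorem elim_new (z : Fin (n + 1)) :
    Sum.elim v (Fin.snoc xs z : Fin (k + 1) → Fin (n + 1)) (new k) = z := by
  simp [new]

theorem r_lt (x y : Var k) : (fLt x y).Realize v xs ↔
    ((Sum.elim v xs x : Fin (n + 1)) : ℕ) < (Sum.elim v xs y : Fin (n + 1)) := Iff.rfl

theorem r_ord (x y : Var k) : (fOrd x y).Realize v xs ↔
    ordc (Sum.elim v xs x : Fin (n + 1)) (Sum.elim v xs y : Fin (n + 1)) := Iff.rfl

theorem r_eq (x y : Var k) : (fEq x y).Realize v xs ↔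
    Sum.elim v xs x = Sum.elim v xs y := Iff.rfl

theorem r_adj (x y : Var k) : (fAdj x y).Realize v xs ↔ ∀ z : Fin (n + 1),
    ((Sum.elim v xs x : Fin (n + 1)) : ℕ) < z →
      ¬ (z : ℕ) < (Sum.elim v xs y : Fin (n + 1)) := by
  simp only [fAdj, BoundedFormula.realize_all, BoundedFormula.realize_imp,
    BoundedFormula.realize_not, r_lt, elim_up, elim_new]

theorem r_bot (y : Var k) : (fBot y).Realize v xs ↔
    rowf (Sum.elim v xs y : Fin (n + 1)) = 0 := by
  simp only [fBot, BoundedFormula.realize_all, BoundedFormula.realize_imp,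
    BoundedFormula.realize_not, r_lt, r_ord, r_adj, elim_up, elim_new]
  exact bottom_iff _

theorem r_col (a b : Var k) : (fCol a b).Realize v xs ↔
    col (Sum.elim v xs a : Fin (n + 1)) = col (Sum.elim v xs b : Fin (n + 1)) := by
  simp only [fCol, BoundedFormula.realize_all, BoundedFormula.realize_imp,
    BoundedFormula.realize_iff, r_lt, r_bot, elim_up, elim_new]
  exact samecol_iff _ _

theorem r_half (a b : Var k) : (fHalf a b).Realize v xs ↔
    ((Sum.elim v xs a : Fin (n + 1)) : ℕ) < (Sum.elim v xs b : Fin (n + 1)) ∧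
    rowf (Sum.elim v xs a : Fin (n + 1)) = rowf (Sum.elim v xs b : Fin (n + 1)) := by
  simp only [fHalf, BoundedFormula.realize_all, BoundedFormula.realize_imp,
    BoundedFormula.realize_not, BoundedFormula.realize_inf, r_lt, r_ord, r_adj, r_bot,
    elim_up, elim_new]
  exact halfrow_iff _ _

theorem r_row (a b : Var k) : (fRow a b).Realize v xs ↔
    rowf (Sum.elim v xs a : Fin (n + 1)) = rowf (Sum.elim v xs b : Fin (n + 1)) := by
  simp only [fRow, BoundedFormula.realize_sup, r_half, r_eq]
  exact samerow_iff _ _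

theorem r_q (a b : Var k) : (fQ a b).Realize v xs ↔
    qf (Sum.elim v xs a : Fin (n + 1)) = (Sum.elim v xs b : Fin (n + 1)) := by
  simp only [fQ, BoundedFormula.realize_inf, r_bot, r_col]
  exact q_iff _ _

theorem r_diag (d : Var k) : (fDiag d).Realize v xs ↔
    rowf (Sum.elim v xs d : Fin (n + 1)) = col (Sum.elim v xs d : Fin (n + 1)) := by
  simp only [fDiag, BoundedFormula.realize_all, BoundedFormula.realize_imp,
    BoundedFormula.realize_not, r_lt, r_row, elim_up, elim_new]
  exact diag_iff _

theorem r_rc (a b : Var k) : (fRC a b).Realize v xs ↔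
    rowf (Sum.elim v xs a : Fin (n + 1)) = col (Sum.elim v xs b : Fin (n + 1)) := by
  simp only [fRC, BoundedFormula.realize_ex, BoundedFormula.realize_inf, r_diag, r_col, r_row,
    elim_up, elim_new]
  exact rc_iff _ _

end

end Ord2

/-- Lemma 3.3: there are FO(<,◁)-formulas expressing
`c(x)=c(y)`, `r(x)=r(y)`, `q(x)=y` and `r(x)=c(y)` in every finite prefix. -/
theorem lt_ordc_define_samecol_samerow_q_rc :
    ∃ (φsamecol φsamerow φq φrc : Lord2.Formula (Fin 2)),
      ∀ n : ℕ,
        letI := struct2 n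
        ∀ a b : Fin (n + 1),
          (φsamecol.Realize ![a, b] ↔ col (a : ℕ) = col (b : ℕ)) ∧
          (φsamerow.Realize ![a, b] ↔ rowf (a : ℕ) = rowf (b : ℕ)) ∧
          (φq.Realize ![a, b] ↔ qf (a : ℕ) = (b : ℕ)) ∧
          (φrc.Realize ![a, b] ↔ rowf (a : ℕ) = col (b : ℕ)) := by
  refine ⟨Ord2.fCol (Sum.inl 0) (Sum.inl 1), Ord2.fRow (Sum.inl 0) (Sum.inl 1),
    Ord2.fQ (Sum.inl 0) (Sum.inl 1), Ord2.fRC (Sum.inl 0) (Sum.inl 1), ?_⟩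
  intro n a b
  exact ⟨Ord2.r_col ![a, b] _ _ _, Ord2.r_row ![a, b] _ _ _, Ord2.r_q ![a, b] _ _ _,
    Ord2.r_rc ![a, b] _ _ _⟩
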